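/- Let 1 ≤ δ ≤ m, let x ∈ range(Aᵀ), let I be a greedy δ-subset of {1,…,m} for x with min_{i∈I} (A^{(i)}x − b_i)² > 0, and let x⁺ be the exact block Kaczmarz update of x with respect to I. Set ξ = ‖Ax − b‖₂² / min_{i∈I} (A^{(i)}x − b_i)². Then ‖x⁺ − x⋆‖₂² ≤ (1 − (δ/ξ)·λ_min⁺(AᵀA)/λ_max(A_IᵀA_I)) · ‖x − x⋆‖₂². -/

import Mathlib

open Matrix Finset

/-- The largest eigenvalue of a square real matrix (as the supremum of its
eigenvalue set). -/
noncomputable def maxEig {k : ℕ} (M : Matrix (Fin k) (Fin k) ℝ) : ℝ :=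
  sSup {μ : ℝ | Module.End.HasEigenvalue (Matrix.mulVecLin M) μ}

/-- The smallest positive eigenvalue of a square real matrix. -/
noncomputable def minPosEig {k : ℕ} (M : Matrix (Fin k) (Fin k) ℝ) : ℝ :=
  sInf {μ : ℝ | Module.End.HasEigenvalue (Matrix.mulVecLin M) μ ∧ 0 < μ}

/-- The restriction of `A` to the rows indexed by `I`. -/
def rowSub {m n : ℕ} (A : Matrix (Fin m) (Fin n) ℝ) (I : Finset (Fin m)) :
    Matrix {i : Fin m // i ∈ I} (Fin n) ℝ :=
  fun i j => A i.1 j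

/-- Squared Euclidean norm. -/
noncomputable def sqNorm {k : ℕ} (v : Fin k → ℝ) : ℝ := ∑ j, (v j) ^ 2

/-- `xp` is the exact block Kaczmarz update of `x` with respect to the row
index set `I`: it satisfies the equations indexed by `I` and minimizes the
distance to `x` among all such points (hence is the orthogonal projection of
`x` onto the affine solution set, which is the unique such minimizer). -/
def IsKaczmarzUpdate {m n : ℕ} (A : Matrix (Fin m) (Fin n) ℝ)
    (b : Fin m → ℝ) (I : Finset (Fin m)) (x xp : Fin n → ℝ) : Prop :=
  (∀ i ∈ I, A i ⬝ᵥ xp = b i) ∧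
  ∀ y : Fin n → ℝ, (∀ i ∈ I, A i ⬝ᵥ y = b i) → sqNorm (xp - x) ≤ sqNorm (y - x)

/-- `I` is a greedy `δ`-subset of `τ` for `x`: `I ⊆ τ`, `|I| = δ`, and the
residual entries on `I` dominate (in absolute value) those on `τ \ I`. -/
def IsGreedySubset {m n : ℕ} (A : Matrix (Fin m) (Fin n) ℝ) (b : Fin m → ℝ)
    (x : Fin n → ℝ) (δ : ℕ) (τ I : Finset (Fin m)) : Prop :=
  I ⊆ τ ∧ I.card = δ ∧
    ∀ i ∈ I, ∀ j ∈ τ \ I, |A j ⬝ᵥ x - b j| ≤ |A i ⬝ᵥ x - b i|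

theorem sqNorm_eq_dotProduct {k : ℕ} (v : Fin k → ℝ) : sqNorm v = v ⬝ᵥ v := by
  simp [sqNorm, dotProduct, pow_two]

theorem sqNorm_nonneg {k : ℕ} (v : Fin k → ℝ) : 0 ≤ sqNorm v :=
  Finset.sum_nonneg fun _ _ => sq_nonneg _

/-- The spectral theorem for a real symmetric matrix, in coordinates. -/
theorem exists_eigen_expansion {k : ℕ} (M : Matrix (Fin k) (Fin k) ℝ) (hM : M.IsHermitian) :
    ∃ (l : Fin k → ℝ) (v : Fin k → Fin k → ℝ),
      (∀ i, v i ≠ 0) ∧ (∀ i, M *ᵥ v i = l i • v i) ∧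
      (∀ u, sqNorm u = ∑ i, (v i ⬝ᵥ u) ^ 2) ∧
      ∀ u, u ⬝ᵥ M *ᵥ u = ∑ i, l i * (v i ⬝ᵥ u) ^ 2 := by
  have hexp : ∀ u w : Fin k → ℝ, u ⬝ᵥ w =
      ∑ i, ((hM.eigenvectorBasis i).ofLp ⬝ᵥ u) * ((hM.eigenvectorBasis i).ofLp ⬝ᵥ w) := by
    intro u w
    have h := hM.eigenvectorBasis.sum_inner_mul_inner (WithLp.toLp 2 u) (WithLp.toLp 2 w)
    simp only [EuclideanSpace.inner_eq_star_dotProduct, star_trivial] at h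
    rw [dotProduct_comm u w, ← h]
    refine Finset.sum_congr rfl fun i _ => ?_
    rw [dotProduct_comm w]
  have heig : ∀ i, M *ᵥ (hM.eigenvectorBasis i).ofLp =
      hM.eigenvalues i • (hM.eigenvectorBasis i).ofLp := hM.mulVec_eigenvectorBasis
  refine ⟨hM.eigenvalues, fun i => (hM.eigenvectorBasis i).ofLp, fun i h => ?_, heig, ?_, ?_⟩
  · exact hM.eigenvectorBasis.orthonormal.ne_zero i ((WithLp.ofLp_eq_zero 2).1 h)
  · intro u
    rw [sqNorm_eq_dotProduct, hexp u u]
    simp only [pow_two]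
  · intro u
    rw [hexp u (M *ᵥ u)]
    refine Finset.sum_congr rfl fun i _ => ?_
    have hMt : Mᵀ = M := by simpa [Matrix.IsHermitian] using hM
    rw [dotProduct_mulVec, ← mulVec_transpose, hMt, heig, smul_dotProduct, smul_eq_mul]
    ring

theorem hasEigenvalue_of_mulVec_eq_smul {k : ℕ} {M : Matrix (Fin k) (Fin k) ℝ} {l : ℝ}
    {v : Fin k → ℝ} (hv : v ≠ 0) (h : M *ᵥ v = l • v) :
    Module.End.HasEigenvalue (Matrix.mulVecLin M) l :=
  Module.End.hasEigenvalue_of_hasEigenvector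
    (Module.End.hasEigenvector_iff.2 ⟨Module.End.mem_eigenspace_iff.2 h, hv⟩)

/-- The Rayleigh quotient is bounded above by the largest eigenvalue. -/
theorem dotProduct_mulVec_le_maxEig {k : ℕ} (M : Matrix (Fin k) (Fin k) ℝ)
    (hM : M.IsHermitian) (u : Fin k → ℝ) : u ⬝ᵥ M *ᵥ u ≤ maxEig M * sqNorm u := by
  obtain ⟨l, v, hv, heig, hn, hq⟩ := exists_eigen_expansion M hM
  rw [hn, hq, Finset.mul_sum]
  refine Finset.sum_le_sum fun i _ => mul_le_mul_of_nonneg_right ?_ (sq_nonneg _)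
  exact le_csSup (Module.End.finite_hasEigenvalue _).bddAbove
    (hasEigenvalue_of_mulVec_eq_smul (hv i) (heig i))

theorem dotProduct_transpose_mul_self_mulVec {ι : Type*} [Fintype ι] {n : ℕ}
    (A : Matrix ι (Fin n) ℝ) (u : Fin n → ℝ) :
    u ⬝ᵥ (Aᵀ * A) *ᵥ u = A *ᵥ u ⬝ᵥ A *ᵥ u := by
  rw [← mulVec_mulVec, dotProduct_mulVec, vecMul_transpose]

theorem isHermitian_transpose_mul_self_real {ι : Type*} [Fintype ι] {n : ℕ}
    (A : Matrix ι (Fin n) ℝ) : (Aᵀ * A).IsHermitian := by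
  simp [Matrix.IsHermitian, conjTranspose_eq_transpose_of_trivial]

/-- On the row space, `‖A u‖²` is bounded below by the smallest positive eigenvalue of `AᵀA`. -/
theorem minPosEig_mul_sqNorm_le {m n : ℕ} (A : Matrix (Fin m) (Fin n) ℝ) (w : Fin m → ℝ) :
    minPosEig (Aᵀ * A) * sqNorm (Aᵀ *ᵥ w) ≤ sqNorm (A *ᵥ (Aᵀ *ᵥ w)) := by
  obtain ⟨l, v, hv, heig, hn, hq⟩ :=
    exists_eigen_expansion (Aᵀ * A) (isHermitian_transpose_mul_self_real A)
  rw [sqNorm_eq_dotProduct (A *ᵥ _), ← dotProduct_transpose_mul_self_mulVec, hn, hq,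
    Finset.mul_sum]
  refine Finset.sum_le_sum fun i _ => ?_
  rcases lt_or_ge 0 (l i) with hl | hl
  · refine mul_le_mul_of_nonneg_right ?_ (sq_nonneg _)
    exact csInf_le ⟨0, fun μ hμ => hμ.2.le⟩ ⟨hasEigenvalue_of_mulVec_eq_smul (hv i) (heig i), hl⟩
  · have hAv : A *ᵥ v i = 0 := by
      have h := dotProduct_transpose_mul_self_mulVec A (v i)
      rw [heig, dotProduct_smul, smul_eq_mul, ← sqNorm_eq_dotProduct,
        ← sqNorm_eq_dotProduct] at h
      have h0 : sqNorm (A *ᵥ v i) = 0 :=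
        le_antisymm (h ▸ mul_nonpos_of_nonpos_of_nonneg hl (sqNorm_nonneg _)) (sqNorm_nonneg _)
      rwa [sqNorm_eq_dotProduct, dotProduct_self_eq_zero] at h0
    have h0 : v i ⬝ᵥ Aᵀ *ᵥ w = 0 := by
      rw [dotProduct_mulVec, vecMul_transpose, hAv, zero_dotProduct]
    simp [h0]

/-- Pythagoras for the block Kaczmarz update and any solution `y` of the block system. -/
theorem IsKaczmarzUpdate.sqNorm_add_le {m n : ℕ} {A : Matrix (Fin m) (Fin n) ℝ}
    {b : Fin m → ℝ} {I : Finset (Fin m)} {x xp y : Fin n → ℝ}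
    (h : IsKaczmarzUpdate A b I x xp) (hy : ∀ i ∈ I, A i ⬝ᵥ y = b i) :
    sqNorm (xp - y) + sqNorm (x - xp) ≤ sqNorm (x - y) := by
  set p : Fin n → ℝ := xp - x with hp
  set q : Fin n → ℝ := xp - y with hq
  have hmin : ∀ t : ℝ, 0 ≤ t ^ 2 * (q ⬝ᵥ q) + 2 * t * (p ⬝ᵥ q) := by
    intro t
    have ht := h.2 (xp + t • q) fun i hi => by
      simp [hq, dotProduct_add, dotProduct_smul, dotProduct_sub, h.1 i hi, hy i hi]
    have he : xp + t • q - x = p + t • q := by rw [hp]; abel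
    rw [he, sqNorm_eq_dotProduct, sqNorm_eq_dotProduct] at ht
    simp only [add_dotProduct, dotProduct_add, smul_dotProduct, dotProduct_smul, smul_eq_mul,
      dotProduct_comm q p] at ht
    linarith
  have hpq : p ⬝ᵥ q ≤ 0 := by
    by_contra! hpos
    have hqq : 0 ≤ q ⬝ᵥ q := sqNorm_eq_dotProduct q ▸ sqNorm_nonneg q
    have ht := hmin (-(p ⬝ᵥ q) / (q ⬝ᵥ q + 1))
    have hval : (-(p ⬝ᵥ q) / (q ⬝ᵥ q + 1)) ^ 2 * (q ⬝ᵥ q)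
        + 2 * (-(p ⬝ᵥ q) / (q ⬝ᵥ q + 1)) * (p ⬝ᵥ q)
        = -((p ⬝ᵥ q) ^ 2 * (q ⬝ᵥ q + 2)) / (q ⬝ᵥ q + 1) ^ 2 := by
      field_simp
      ring
    rw [hval] at ht
    have : 0 < (p ⬝ᵥ q) ^ 2 * (q ⬝ᵥ q + 2) / (q ⬝ᵥ q + 1) ^ 2 := by positivity
    rw [neg_div] at ht
    linarith
  have hx : x - xp = -p := by rw [hp]; abel
  have hxy : x - y = q - p := by rw [hp, hq]; abel
  rw [hx, hxy]
  simp only [sqNorm_eq_dotProduct, sub_dotProduct, dotProduct_sub, neg_dotProduct,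
    dotProduct_neg, dotProduct_comm q p]
  linarith

theorem greedy_block_kaczmarz_one_step {m n : ℕ} (δ : ℕ) (hδ1 : 1 ≤ δ) (hδm : δ ≤ m)
    (A : Matrix (Fin m) (Fin n) ℝ) (hA : A ≠ 0) (b : Fin m → ℝ)
    (xstar : Fin n → ℝ) (hconsistent : A.mulVec xstar = b)
    (hxstar : xstar ∈ Set.range Aᵀ.mulVec)
    (x : Fin n → ℝ) (hx : x ∈ Set.range Aᵀ.mulVec)
    (I : Finset (Fin m))
    (hI : IsGreedySubset A b x δ (Finset.univ : Finset (Fin m)) I)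
    (hminpos : 0 < sInf ((fun i => (A i ⬝ᵥ x - b i) ^ 2) '' ↑I))
    (xp : Fin n → ℝ) (hxp : IsKaczmarzUpdate A b I x xp)
    (ξ : ℝ)
    (hξ : ξ = sqNorm (A.mulVec x - b) / sInf ((fun i => (A i ⬝ᵥ x - b i) ^ 2) '' ↑I)) :
    sqNorm (xp - xstar) ≤
      (1 - ((δ : ℝ) / ξ) *
          (minPosEig (Aᵀ * A) / maxEig ((rowSub A I)ᵀ * rowSub A I))) *
        sqNorm (x - xstar) := by
  set μ := sInf ((fun i => (A i ⬝ᵥ x - b i) ^ 2) '' (I : Set (Fin m)))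
  have hstar : ∀ i, A i ⬝ᵥ xstar = b i := fun i => congrFun hconsistent i
  have hpyth := hxp.sqNorm_add_le fun i _ => hstar i
  have hblock : (δ : ℝ) * μ ≤
      maxEig ((rowSub A I)ᵀ * rowSub A I) * sqNorm (x - xp) := by
    refine le_trans ?_ (dotProduct_mulVec_le_maxEig _ (isHermitian_transpose_mul_self_real _) _)
    rw [dotProduct_transpose_mul_self_mulVec]
    have hr : rowSub A I *ᵥ (x - xp) ⬝ᵥ rowSub A I *ᵥ (x - xp)
        = ∑ i ∈ I, (A i ⬝ᵥ x - b i) ^ 2 := by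
      rw [← Finset.sum_coe_sort I, dotProduct]
      refine Finset.sum_congr rfl fun i _ => ?_
      have : (rowSub A I *ᵥ (x - xp)) i = A i ⬝ᵥ x - b i := by
        rw [← hxp.1 i i.2, ← dotProduct_sub]
        rfl
      rw [this, pow_two]
    rw [hr, ← hI.2.1, ← nsmul_eq_mul]
    refine Finset.card_nsmul_le_sum _ _ _ fun i hi => ?_
    exact csInf_le (I.finite_toSet.image _).bddBelow ⟨i, hi, rfl⟩
  have hrow : minPosEig (Aᵀ * A) * sqNorm (x - xstar) ≤ sqNorm (A *ᵥ x - b) := by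
    obtain ⟨w, rfl⟩ := hx
    obtain ⟨z, rfl⟩ := hxstar
    rw [← hconsistent, ← mulVec_sub A, ← mulVec_sub Aᵀ]
    exact minPosEig_mul_sqNorm_le A (w - z)
  have hδ : (0 : ℝ) < δ := by exact_mod_cast hδ1
  have hδμ : 0 < (δ : ℝ) * μ := mul_pos hδ hminpos
  have hL : 0 < maxEig ((rowSub A I)ᵀ * rowSub A I) :=
    pos_of_mul_pos_left (hδμ.trans_le hblock) (sqNorm_nonneg _)
  set L := maxEig ((rowSub A I)ᵀ * rowSub A I)
  set R := sqNorm (A *ᵥ x - b)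
  have hR0 : 0 ≤ R := sqNorm_nonneg _
  have hgain : (δ : ℝ) / ξ * (minPosEig (Aᵀ * A) / L) * sqNorm (x - xstar)
      ≤ sqNorm (x - xp) := by
    calc (δ : ℝ) / ξ * (minPosEig (Aᵀ * A) / L) * sqNorm (x - xstar)
        = δ * μ / L * (minPosEig (Aᵀ * A) * sqNorm (x - xstar) / R) := by
          rw [hξ, div_div_eq_mul_div]; ring
      _ ≤ δ * μ / L * 1 := by
          gcongr
          exact div_le_one_of_le₀ hrow hR0
      _ ≤ sqNorm (x - xp) := by
          rw [mul_one, div_le_iff₀ hL, mul_comm (sqNorm _)]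
          exact hblock
  linarith
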